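/- arXiv:2406.10575 — 8 statements merged into one kernel-verified Lean document; each statement's English description precedes it below -/
import Mathlib

section
/- Let K be a field and let A be a (not necessarily unital) commutative associative K-algebra with dim_K A = 2. If the multiplication map is surjective, i.e. the K-linear map A ⊗_K A → A induced by multiplication is surjective, then A has a multiplicative identity element. -/
/-!
An algebra `A` whose multiplication `A ⊗ A → A` is surjective is an idempotent ideal of its
unitization. If moreover `A` is finitely generated as a module, then so is this ideal, and
Nakayama's lemma, applied to the ideal as a module over the unitization, yields an element of the
ideal itself that acts on it as the identity.
-/

/-- The augmentation ideal of the unitization of `A`: the kernel of the projection onto the scalars,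
that is, the copy of `A` inside its unitization. -/
def augmentationIdeal (R A : Type*) [CommSemiring R] [NonUnitalSemiring A] [Module R A]
    [IsScalarTower R A A] [SMulCommClass R A A] : Ideal (Unitization R A) :=
  RingHom.ker (Unitization.fstHom R A)

namespace augmentationIdeal

section NonUnitalSemiring

variable {R A : Type*} [CommSemiring R] [NonUnitalSemiring A] [Module R A]
  [IsScalarTower R A A] [SMulCommClass R A A]

instance : (augmentationIdeal R A).IsTwoSided :=
  inferInstanceAs (RingHom.ker (Unitization.fstHom R A)).IsTwoSided

theorem inr_mem (a : A) : (a : Unitization R A) ∈ augmentationIdeal R A :=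
  Unitization.fst_inr R a

theorem mem_iff_exists_inr_eq {x : Unitization R A} :
    x ∈ augmentationIdeal R A ↔ ∃ a : A, (a : Unitization R A) = x := by
  constructor
  · intro hx
    exact ⟨x.snd, Unitization.ext (Eq.symm hx) rfl⟩
  · rintro ⟨a, rfl⟩
    exact inr_mem a

theorem restrictScalars_eq_range_inrHom :
    (augmentationIdeal R A).restrictScalars R = LinearMap.range (Unitization.inrHom R R A) :=
  Submodule.ext fun _ ↦ mem_iff_exists_inr_eq

variable (R A) in
protected theorem fg [Module.Finite R A] : (augmentationIdeal R A).FG := by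
  refine Submodule.FG.of_restrictScalars R ?_
  rw [restrictScalars_eq_range_inrHom, LinearMap.range_eq_map]
  exact Module.Finite.fg_top.map _

theorem inr_lift_mul_mem_mul_self (t : TensorProduct R A A) :
    (TensorProduct.lift (LinearMap.mul R A) t : Unitization R A) ∈
      augmentationIdeal R A * augmentationIdeal R A := by
  induction t with
  | zero => simp
  | tmul a b => simpa using Ideal.mul_mem_mul (inr_mem a) (inr_mem b)
  | add s t hs ht =>
    rw [map_add, Unitization.inr_add]
    exact add_mem hs ht

theorem isIdempotentElem_of_surjective_lift_mul
    (h : Function.Surjective (TensorProduct.lift (LinearMap.mul R A))) :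
    IsIdempotentElem (augmentationIdeal R A) := by
  refine le_antisymm Ideal.mul_le_left fun x hx ↦ ?_
  obtain ⟨a, rfl⟩ := mem_iff_exists_inr_eq.mp hx
  obtain ⟨t, rfl⟩ := h a
  exact inr_lift_mul_mem_mul_self t

end NonUnitalSemiring

theorem exists_forall_mul_eq_self_of_fg_of_isIdempotentElem {R A : Type*} [CommRing R]
    [NonUnitalCommRing A] [Module R A] [IsScalarTower R A A] [SMulCommClass R A A]
    (hfg : (augmentationIdeal R A).FG) (hidem : IsIdempotentElem (augmentationIdeal R A)) :
    ∃ u : A, ∀ x : A, u * x = x := by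
  obtain ⟨e, he, he_smul⟩ :=
    Submodule.exists_mem_and_smul_eq_self_of_fg_of_le_smul _ _ hfg hidem.ge
  obtain ⟨u, rfl⟩ := mem_iff_exists_inr_eq.mp he
  refine ⟨u, fun x ↦ Unitization.inr_injective (R := R) ?_⟩
  rw [Unitization.inr_mul]
  exact he_smul x (inr_mem x)

end augmentationIdeal

theorem exists_forall_mul_eq_self_of_surjective_lift_mul {R A : Type*} [CommRing R]
    [NonUnitalCommRing A] [Module R A] [IsScalarTower R A A] [SMulCommClass R A A]
    [Module.Finite R A] (h : Function.Surjective (TensorProduct.lift (LinearMap.mul R A))) :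
    ∃ u : A, ∀ x : A, u * x = x :=
  augmentationIdeal.exists_forall_mul_eq_self_of_fg_of_isIdempotentElem
    (augmentationIdeal.fg R A) (augmentationIdeal.isIdempotentElem_of_surjective_lift_mul h)

theorem stmt_2_general {R A : Type*} [CommRing R] [AddCommGroup A] [Module R A] [Module.Finite R A]
    (m : A →ₗ[R] A →ₗ[R] A)
    (hcomm : ∀ x y : A, m x y = m y x)
    (hassoc : ∀ x y z : A, m (m x y) z = m x (m y z))
    (hsurj : Function.Surjective (TensorProduct.lift m)) :
    ∃ u : A, ∀ x : A, m u x = x := by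
  let : NonUnitalCommRing A :=
    { ‹AddCommGroup A› with
      mul := fun x y ↦ m x y
      left_distrib := fun x ↦ map_add (m x)
      right_distrib := LinearMap.map_add₂ m
      zero_mul := LinearMap.map_zero₂ m
      mul_zero := fun x ↦ map_zero (m x)
      mul_assoc := hassoc
      mul_comm := hcomm }
  have : IsScalarTower R A A := ⟨LinearMap.map_smul₂ m⟩
  have : SMulCommClass R A A := ⟨fun c x y ↦ ((m x).map_smul c y).symm⟩
  exact exists_forall_mul_eq_self_of_surjective_lift_mul (R := R) hsurj

/-- Any 2-dimensional commutative associative (not necessarily unital) algebra over a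
field with surjective multiplication is unital. -/
theorem stmt_2 (K : Type*) [Field K]
    (A : Type*) [AddCommGroup A] [Module K A]
    [FiniteDimensional K A] (hdim : Module.finrank K A = 2)
    (m : A →ₗ[K] A →ₗ[K] A)
    (hcomm : ∀ x y : A, m x y = m y x)
    (hassoc : ∀ x y z : A, m (m x y) z = m x (m y z))
    (hsurj : Function.Surjective (TensorProduct.lift m)) :
    ∃ u : A, ∀ x : A, m u x = x :=
  stmt_2_general m hcomm hassoc hsurj
end

section
/- Let R be a commutative ring and let A be an R-module generated by two elements e₁, e₂, equipped with a commutative R-bilinear multiplication m : A × A → A. Then m is associative (i.e. m(m(x,y),z) = m(x,m(y,z)) for all x,y,z ∈ A) if and only if m(m(e₁,e₁),e₂) = m(e₁,m(e₁,e₂)) and m(m(e₂,e₂),e₁) = m(e₂,m(e₂,e₁)). -/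
/-!
Both sides of the associativity identity are trilinear, so it suffices to compare them on triples
of generators. A commutative product satisfies the identity on every triple `(x, y, x)`, and on
`(z, y, x)` as soon as it does so on `(x, y, z)`. Of the eight triples of generators this leaves
only `(e₁, e₁, e₂)` and `(e₂, e₂, e₁)`.
-/

section Span

variable {R M N P Q : Type*} [CommSemiring R] [AddCommMonoid M] [AddCommMonoid N]
  [AddCommMonoid P] [AddCommMonoid Q] [Module R M] [Module R N] [Module R P] [Module R Q]

theorem trilinearMap_ext_on {s : Set M} {t : Set N} {u : Set P} {f g : M →ₗ[R] N →ₗ[R] P →ₗ[R] Q}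
    (hs : Submodule.span R s = ⊤) (ht : Submodule.span R t = ⊤) (hu : Submodule.span R u = ⊤)
    (h : ∀ x ∈ s, ∀ y ∈ t, ∀ z ∈ u, f x y z = g x y z) : f = g :=
  LinearMap.ext_on hs fun x hx ↦ LinearMap.ext_on ht fun y hy ↦ LinearMap.ext_on hu fun z hz ↦
    h x hx y hy z hz

theorem bilinearMap_assoc_iff_of_span_eq_top {s : Set M} (hs : Submodule.span R s = ⊤)
    (m : M →ₗ[R] M →ₗ[R] M) :
    (∀ x y z, m (m x y) z = m x (m y z)) ↔
      ∀ x ∈ s, ∀ y ∈ s, ∀ z ∈ s, m (m x y) z = m x (m y z) := by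
  refine ⟨fun h x _ y _ z _ ↦ h x y z, fun h x y z ↦ ?_⟩
  have h_trilinear : m.compr₂ m = (LinearMap.llcomp R M M M).compl₁₂ m m :=
    trilinearMap_ext_on hs hs hs h
  exact LinearMap.congr_fun (LinearMap.congr_fun₂ h_trilinear x y) z

end Span

section CommutativeOperation

variable {α : Type*} {op : α → α → α}

theorem flexible_of_comm (hcomm : ∀ x y, op x y = op y x) (x y : α) :
    op (op x y) x = op x (op y x) := by
  rw [hcomm (op x y) x, hcomm x y]

theorem assoc_reverse_of_comm (hcomm : ∀ x y, op x y = op y x) {x y z : α}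
    (h : op (op x y) z = op x (op y z)) : op (op z y) x = op z (op y x) :=
  calc
    op (op z y) x = op x (op y z) := by rw [hcomm (op z y) x, hcomm z y]
    _ = op (op x y) z := h.symm
    _ = op z (op y x) := by rw [hcomm (op x y) z, hcomm x y]

theorem assoc_on_pair_iff_of_comm (hcomm : ∀ x y, op x y = op y x) (a b : α) :
    (∀ x ∈ ({a, b} : Set α), ∀ y ∈ ({a, b} : Set α), ∀ z ∈ ({a, b} : Set α),
        op (op x y) z = op x (op y z)) ↔
      op (op a a) b = op a (op a b) ∧ op (op b b) a = op b (op b a) := by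
  refine ⟨fun h ↦ ⟨h a (by simp) a (by simp) b (by simp), h b (by simp) b (by simp) a (by simp)⟩,
    fun ⟨haab, hbba⟩ ↦ ?_⟩
  rintro x (rfl | rfl) y (rfl | rfl) z (rfl | rfl)
  · exact flexible_of_comm hcomm _ _
  · exact haab
  · exact flexible_of_comm hcomm _ _
  · exact assoc_reverse_of_comm hcomm hbba
  · exact assoc_reverse_of_comm hcomm haab
  · exact flexible_of_comm hcomm _ _
  · exact hbba
  · exact flexible_of_comm hcomm _ _

end CommutativeOperation

theorem stmt_3_general {R A : Type*} [CommSemiring R] [AddCommMonoid A] [Module R A]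
    {e₁ e₂ : A} (hgen : Submodule.span R ({e₁, e₂} : Set A) = ⊤) (m : A →ₗ[R] A →ₗ[R] A)
    (hcomm : ∀ x y : A, m x y = m y x) :
    (∀ x y z : A, m (m x y) z = m x (m y z)) ↔
      (m (m e₁ e₁) e₂ = m e₁ (m e₁ e₂) ∧ m (m e₂ e₂) e₁ = m e₂ (m e₂ e₁)) :=
  (bilinearMap_assoc_iff_of_span_eq_top hgen m).trans
    (assoc_on_pair_iff_of_comm (op := fun x y ↦ m x y) hcomm e₁ e₂)

/-- For a commutative bilinear multiplication on a module generated by two elements,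
associativity reduces to two identities on the generators. -/
theorem stmt_3 (R : Type*) [CommRing R]
    (A : Type*) [AddCommGroup A] [Module R A]
    (e₁ e₂ : A) (hgen : Submodule.span R ({e₁, e₂} : Set A) = ⊤)
    (m : A →ₗ[R] A →ₗ[R] A)
    (hcomm : ∀ x y : A, m x y = m y x) :
    (∀ x y z : A, m (m x y) z = m x (m y z)) ↔
      (m (m e₁ e₁) e₂ = m e₁ (m e₁ e₂) ∧ m (m e₂ e₂) e₁ = m e₂ (m e₂ e₁)) :=
  stmt_3_general hgen m hcomm
end

section
/- Let K be a field and let A be a K-vector space with dim_K A ≤ 2, equipped with a commutative K-bilinear multiplication m : A × A → A. If A contains a multiplicative identity element (an element 1 with m(1,x) = x for all x ∈ A), then m is associative: m(m(x,y),z) = m(x,m(y,z)) for all x,y,z ∈ A. -/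
/-! The associator of a bilinear multiplication is trilinear and vanishes as soon as one of its
arguments is a two-sided identity `e`. If `e` and `t` span, only the triple `(t, t, t)` is left, and
`t` commutes with `t * t` because `t * t` is a linear combination of `e` and `t`. -/

section Span

variable {R M : Type*} [CommSemiring R] [AddCommMonoid M] [Module R M]

theorem bilinear_comm_of_span_eq_top {N : Type*} [AddCommMonoid N] [Module R N]
    {f : M →ₗ[R] M →ₗ[R] N} {s : Set M} (hs : Submodule.span R s = ⊤)
    (hcomm : ∀ x ∈ s, ∀ y ∈ s, f x y = f y x) (x y : M) : f x y = f y x := by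
  have hflip : f = f.flip :=
    LinearMap.ext_on hs fun x hx => LinearMap.ext_on hs fun y hy => hcomm x hx y hy
  exact LinearMap.congr_fun₂ hflip x y

variable {m : M →ₗ[R] M →ₗ[R] M}

theorem bilinear_assoc_of_span_eq_top {s : Set M} (hs : Submodule.span R s = ⊤)
    (hassoc : ∀ x ∈ s, ∀ y ∈ s, ∀ z ∈ s, m (m x y) z = m x (m y z)) (x y z : M) :
    m (m x y) z = m x (m y z) := by
  have extend_left (y) (hy : y ∈ s) (z) (hz : z ∈ s) : m.flip z ∘ₗ m.flip y = m.flip (m y z) :=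
    LinearMap.ext_on hs fun x hx => hassoc x hx y hy z hz
  have extend_middle (x z) (hz : z ∈ s) : m.flip z ∘ₗ m x = m x ∘ₗ m.flip z :=
    LinearMap.ext_on hs fun y hy => LinearMap.congr_fun (extend_left y hy z hz) x
  have extend_right (x y) : m (m x y) = m x ∘ₗ m y :=
    LinearMap.ext_on hs fun z hz => LinearMap.congr_fun (extend_middle x z hz) y
  exact LinearMap.congr_fun (extend_right x y) z

variable {e t : M}

theorem bilinear_comm_of_span_identity_pair_eq_top (hleft : ∀ x, m e x = x)
    (hright : ∀ x, m x e = x) (hspan : Submodule.span R {e, t} = ⊤) (x y : M) :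
    m x y = m y x := by
  refine bilinear_comm_of_span_eq_top hspan ?_ x y
  rintro x (rfl | rfl) y (rfl | rfl) <;> simp only [hleft, hright]

theorem bilinear_assoc_of_span_identity_pair_eq_top (hleft : ∀ x, m e x = x)
    (hright : ∀ x, m x e = x) (hspan : Submodule.span R {e, t} = ⊤) (x y z : M) :
    m (m x y) z = m x (m y z) := by
  have hcube : m (m t t) t = m t (m t t) :=
    bilinear_comm_of_span_identity_pair_eq_top hleft hright hspan (m t t) t
  refine bilinear_assoc_of_span_eq_top hspan ?_ x y z
  rintro x (rfl | rfl) y (rfl | rfl) z (rfl | rfl) <;> simp only [hleft, hright, hcube]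

end Span

theorem exists_sup_span_singleton_eq_top_of_isPrincipal_quotient {R M : Type*} [Ring R]
    [AddCommGroup M] [Module R M] {W : Submodule R M}
    (hW : (⊤ : Submodule R (M ⧸ W)).IsPrincipal) :
    ∃ t : M, W ⊔ Submodule.span R {t} = ⊤ := by
  obtain ⟨q, hq⟩ := hW.principal
  obtain ⟨t, rfl⟩ := W.mkQ_surjective q
  refine ⟨t, (W.map_mkQ_eq_top _).mp ?_⟩
  rw [Submodule.map_span, Set.image_singleton, hq]

theorem exists_span_pair_eq_top_of_finrank_le_two {K V : Type*} [DivisionRing K] [AddCommGroup V]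
    [Module K V] [FiniteDimensional K V] (hV : Module.finrank K V ≤ 2) {u : V} (hu : u ≠ 0) :
    ∃ t : V, Submodule.span K {u, t} = ⊤ := by
  have hquot : Module.finrank K (V ⧸ Submodule.span K {u}) ≤ 1 := by
    have hadd := (Submodule.span K {u}).finrank_quotient_add_finrank
    rw [finrank_span_singleton hu] at hadd
    lia
  simpa only [Submodule.span_insert] using
    exists_sup_span_singleton_eq_top_of_isPrincipal_quotient
      (Module.finrank_le_one_iff_top_isPrincipal.mp hquot)

theorem stmt_4_general {K A : Type*} [Field K] [AddCommGroup A] [Module K A]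
    [FiniteDimensional K A] (hdim : Module.finrank K A ≤ 2) (m : A →ₗ[K] A →ₗ[K] A)
    (one : A) (hleft : ∀ x, m one x = x) (hright : ∀ x, m x one = x) (x y z : A) :
    m (m x y) z = m x (m y z) := by
  rcases subsingleton_or_nontrivial A with _ | _
  · exact Subsingleton.elim _ _
  have hone : one ≠ 0 := by
    rintro rfl
    obtain ⟨w, hw⟩ := exists_ne (0 : A)
    exact hw (by rw [← hright w, map_zero])
  obtain ⟨t, hspan⟩ := exists_span_pair_eq_top_of_finrank_le_two hdim hone
  exact bilinear_assoc_of_span_identity_pair_eq_top hleft hright hspan x y z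

/-- A commutative bilinear multiplication on a vector space of dimension at most 2
that admits an identity element is associative. -/
theorem stmt_4 (K : Type*) [Field K]
    (A : Type*) [AddCommGroup A] [Module K A]
    [FiniteDimensional K A] (hdim : Module.finrank K A ≤ 2)
    (m : A →ₗ[K] A →ₗ[K] A)
    (hcomm : ∀ x y : A, m x y = m y x)
    (one : A) (hone : ∀ x : A, m one x = x) :
    ∀ x y z : A, m (m x y) z = m x (m y z) :=
  stmt_4_general hdim m one hone fun x => (hcomm x one).trans (hone x)
end

section
/- Let K be a field of characteristic ≠ 2 and let α₂, β₂ ∈ K. Let A be the K-algebra on K² with basis e₁, e₂ whose multiplication is the commutative K-bilinear map m with m(e₁,e₁) = e₁, m(e₁,e₂) = α₂e₁ + β₂e₂, m(e₂,e₂) = e₂. Then m is associative if and only if (α₂,β₂) ∈ {(0,0), (0,1), (1,0)}; moreover in each of these three cases A is unital, with identity element e₁ + e₂, e₁, and e₂ respectively. -/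
/-! For a commutative multiplication, `(x y) z = x (y z)` says that the multiplication operators of
`x` and `z` commute. This only has to be checked on distinct basis vectors, so with a basis
`e₁, e₂` it is the single equation `L₁ L₂ = L₂ L₁`. If `e₁` and `e₂` are idempotent and
`e₁ e₂ = α e₁ + β e₂`, comparing the values at `e₁` and `e₂` turns it into `α² = α`, `β² = β`,
`α β = 0`, and then `(1 - α) e₁ + (1 - β) e₂` is the identity element. -/

open Module

section CommutingOperators

variable {R M : Type*} [CommSemiring R] [AddCommMonoid M] [Module R M] {m : M →ₗ[R] End R M}

theorem mul_assoc_iff_forall_commute_of_mul_comm (hcomm : ∀ x y, m x y = m y x) :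
    (∀ x y z, m (m x y) z = m x (m y z)) ↔ ∀ x z, Commute (m x) (m z) := by
  simp only [commute_iff_eq, LinearMap.ext_iff, End.mul_apply]
  constructor
  · intro h x z y
    rw [hcomm z y, ← h, hcomm z]
  · intro h x y z
    rw [hcomm (m x y), ← h, hcomm z]

theorem forall_commute_iff_pairwise_of_span_range_eq_top {ι : Type*} {v : ι → M}
    (hv : Submodule.span R (Set.range v) = ⊤) :
    (∀ x y, Commute (m x) (m y)) ↔ Pairwise fun i j ↦ Commute (m (v i)) (m (v j)) := by
  refine ⟨fun h i j _ ↦ h (v i) (v j), fun h x y ↦ ?_⟩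
  have hx : x ∈ Submodule.span R (Set.range v) := hv ▸ Submodule.mem_top
  have hy : y ∈ Submodule.span R (Set.range v) := hv ▸ Submodule.mem_top
  induction hx, hy using Submodule.span_induction₂ with
  | mem_mem x y hx hy =>
    obtain ⟨i, rfl⟩ := hx
    obtain ⟨j, rfl⟩ := hy
    obtain rfl | hij := eq_or_ne i j
    · exact Commute.refl _
    · exact h hij
  | zero_left y _ => simp only [map_zero, Commute.zero_left]
  | zero_right x _ => simp only [map_zero, Commute.zero_right]
  | add_left x y z _ _ _ hxz hyz => simpa only [map_add] using hxz.add_left hyz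
  | add_right x y z _ _ _ hxy hxz => simpa only [map_add] using hxy.add_right hxz
  | smul_left r x y _ _ hxy => simpa only [map_smul] using hxy.smul_left r
  | smul_right r x y _ _ hxy => simpa only [map_smul] using hxy.smul_right r

end CommutingOperators

theorem orthogonalIdempotents_pair_iff {R : Type*} [CommSemiring R] {a b : R} :
    OrthogonalIdempotents ![a, b] ↔ IsIdempotentElem a ∧ IsIdempotentElem b ∧ a * b = 0 := by
  simp [orthogonalIdempotents_iff, Pairwise, Fin.forall_fin_two, mul_comm b a, and_assoc]

theorem orthogonalIdempotents_pair_iff_of_noZeroDivisors {R : Type*} [CommRing R]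
    [NoZeroDivisors R] {a b : R} :
    OrthogonalIdempotents ![a, b] ↔ (a, b) = (0, 0) ∨ (a, b) = (0, 1) ∨ (a, b) = (1, 0) := by
  simp only [orthogonalIdempotents_pair_iff, IsIdempotentElem.iff_eq_zero_or_one, mul_eq_zero,
    Prod.mk.injEq]
  grind

/-- The multiplication `m` is commutative, both vectors of the basis `b` are idempotent, and their
product is `α • b 0 + β • b 1`. With `b` the standard basis of `K²` this is the algebra of the
theorem. -/
structure IsIdempotentPairMul {R M : Type*} [CommSemiring R] [AddCommMonoid M] [Module R M]
    (m : M →ₗ[R] End R M) (b : Basis (Fin 2) R M) (α β : R) : Prop where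
  mul_comm : ∀ x y, m x y = m y x
  apply_zero_zero : m (b 0) (b 0) = b 0
  apply_zero_one : m (b 0) (b 1) = α • b 0 + β • b 1
  apply_one_one : m (b 1) (b 1) = b 1

namespace IsIdempotentPairMul

variable {R M : Type*} [CommRing R] [AddCommGroup M] [Module R M] {m : M →ₗ[R] End R M}
  {b : Basis (Fin 2) R M} {α β : R}

theorem apply_one_zero (h : IsIdempotentPairMul m b α β) : m (b 1) (b 0) = α • b 0 + β • b 1 :=
  (h.mul_comm _ _).trans h.apply_zero_one

theorem commute_iff_orthogonalIdempotents (h : IsIdempotentPairMul m b α β) :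
    Commute (m (b 0)) (m (b 1)) ↔ OrthogonalIdempotents ![α, β] := by
  have at_zero : m (b 0) (m (b 1) (b 0)) = (α + α * β) • b 0 + (β * β) • b 1 := by
    simp only [h.apply_one_zero, h.apply_zero_zero, h.apply_zero_one, map_add, map_smul]
    module
  have at_one : m (b 1) (m (b 0) (b 1)) = (α * α) • b 0 + (β + α * β) • b 1 := by
    simp only [h.apply_one_zero, h.apply_one_one, h.apply_zero_one, map_add, map_smul]
    module
  have coeff_ext (s t s' t' : R) :
      s • b 0 + t • b 1 = s' • b 0 + t' • b 1 ↔ s = s' ∧ t = t' := by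
    simp [b.ext_elem_iff, Fin.forall_fin_two]
  calc Commute (m (b 0)) (m (b 1))
      ↔ m (b 0) (m (b 1) (b 0)) = m (b 1) (m (b 0) (b 0)) ∧
          m (b 0) (m (b 1) (b 1)) = m (b 1) (m (b 0) (b 1)) :=
        ⟨fun hc ↦ ⟨LinearMap.congr_fun hc (b 0), LinearMap.congr_fun hc (b 1)⟩,
          fun ⟨h₀, h₁⟩ ↦ b.ext (Fin.forall_fin_two.mpr ⟨h₀, h₁⟩)⟩
    _ ↔ (α + α * β = α ∧ β * β = β) ∧ α = α * α ∧ β = β + α * β := by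
        rw [at_zero, at_one, h.apply_zero_zero, h.apply_one_one, h.apply_one_zero, h.apply_zero_one,
          coeff_ext, coeff_ext]
    _ ↔ OrthogonalIdempotents ![α, β] := by
        simp only [orthogonalIdempotents_pair_iff, IsIdempotentElem, add_eq_left, left_eq_add]
        grind

theorem mul_assoc_iff_orthogonalIdempotents (h : IsIdempotentPairMul m b α β) :
    (∀ x y z, m (m x y) z = m x (m y z)) ↔ OrthogonalIdempotents ![α, β] := by
  rw [mul_assoc_iff_forall_commute_of_mul_comm h.mul_comm,
    forall_commute_iff_pairwise_of_span_range_eq_top b.span_eq,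
    ← h.commute_iff_orthogonalIdempotents]
  simp [Pairwise, Fin.forall_fin_two, Commute.symm_iff (a := m (b 1))]

theorem left_id_of_orthogonalIdempotents (h : IsIdempotentPairMul m b α β)
    (hαβ : OrthogonalIdempotents ![α, β]) (x : M) :
    m ((1 - α) • b 0 + (1 - β) • b 1) x = x := by
  obtain ⟨hα, hβ, hmul⟩ := orthogonalIdempotents_pair_iff.mp hαβ
  suffices m ((1 - α) • b 0 + (1 - β) • b 1) = 1 from LinearMap.congr_fun this x
  refine b.ext (Fin.forall_fin_two.mpr ⟨?_, ?_⟩) <;>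
    simp only [map_add, map_smul, LinearMap.add_apply, LinearMap.smul_apply, End.one_apply,
      h.apply_zero_zero, h.apply_one_zero, h.apply_zero_one, h.apply_one_one]
  · linear_combination (norm := module) -hmul • b 0 - hβ.eq • b 1
  · linear_combination (norm := module) -hα.eq • b 0 - hmul • b 1

end IsIdempotentPairMul

theorem stmt_5_general {R M : Type*} [CommRing R] [NoZeroDivisors R] [AddCommGroup M] [Module R M]
    {m : M →ₗ[R] M →ₗ[R] M} {b : Basis (Fin 2) R M} {α β : R}
    (h : IsIdempotentPairMul m b α β) :
    ((∀ x y z, m (m x y) z = m x (m y z)) ↔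
      ((α, β) = (0, 0) ∨ (α, β) = (0, 1) ∨ (α, β) = (1, 0))) ∧
    ((α, β) = (0, 0) → ∀ x, m (b 0 + b 1) x = x) ∧
    ((α, β) = (0, 1) → ∀ x, m (b 0) x = x) ∧
    ((α, β) = (1, 0) → ∀ x, m (b 1) x = x) := by
  have left_id (hαβ : (α, β) = (0, 0) ∨ (α, β) = (0, 1) ∨ (α, β) = (1, 0)) :=
    h.left_id_of_orthogonalIdempotents (orthogonalIdempotents_pair_iff_of_noZeroDivisors.mpr hαβ)
  refine ⟨h.mul_assoc_iff_orthogonalIdempotents.trans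
    orthogonalIdempotents_pair_iff_of_noZeroDivisors, ?_, ?_, ?_⟩
  all_goals
    rintro ⟨⟩
    simpa using left_id (by simp)

theorem coe_basisFun_fin_two (R : Type*) [Semiring R] :
    ⇑(Pi.basisFun R (Fin 2)) = ![![1, 0], ![0, 1]] := by
  ext i j
  fin_cases i <;> fin_cases j <;> simp

/-- The algebra `m⁶`: associativity holds iff `(α₂,β₂) ∈ {(0,0),(0,1),(1,0)}`, and in
these cases the identity element is `e₁+e₂`, `e₁`, `e₂` respectively. -/
theorem stmt_5 (K : Type*) [Field K] (hchar : (2 : K) ≠ 0) (α₂ β₂ : K)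
    (m : (Fin 2 → K) →ₗ[K] (Fin 2 → K) →ₗ[K] (Fin 2 → K))
    (hcomm : ∀ x y, m x y = m y x)
    (h11 : m ![1, 0] ![1, 0] = ![1, 0])
    (h12 : m ![1, 0] ![0, 1] = α₂ • ![1, 0] + β₂ • ![0, 1])
    (h22 : m ![0, 1] ![0, 1] = ![0, 1]) :
    ((∀ x y z, m (m x y) z = m x (m y z)) ↔
      ((α₂, β₂) = (0, 0) ∨ (α₂, β₂) = (0, 1) ∨ (α₂, β₂) = (1, 0))) ∧
    ((α₂, β₂) = (0, 0) → ∀ x, m (![1, 0] + ![0, 1]) x = x) ∧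
    ((α₂, β₂) = (0, 1) → ∀ x, m ![1, 0] x = x) ∧
    ((α₂, β₂) = (1, 0) → ∀ x, m ![0, 1] x = x) := by
  have h : IsIdempotentPairMul m (Pi.basisFun K (Fin 2)) α₂ β₂ := by
    constructor <;> simpa only [coe_basisFun_fin_two]
  simpa only [coe_basisFun_fin_two, Matrix.cons_val] using stmt_5_general h
end

section
/- Let K be a field of characteristic ≠ 2 and let β₂ ∈ K. Let A be the K-algebra on K² with basis e₁, e₂ whose multiplication is the commutative K-bilinear map m with m(e₁,e₁) = e₁, m(e₁,e₂) = β₂e₂, m(e₂,e₂) = 0. Then m is associative if and only if β₂ = 0 or β₂ = 1, and A is unital if and only if β₂ = 1, in which case e₁ is the identity element. -/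
/-!
In coordinates the multiplication is that of the dual numbers with the `ε`-component of each
product scaled by `β₂`. Multiplying `e₂` twice by `e₁` scales it by `β₂²`, while multiplying it by
`e₁e₁ = e₁` scales it by `β₂`, so associativity amounts to `β₂² = β₂`. An identity element `u` must
have `e₁`-coordinate `1` because it fixes `e₁`, and then it scales `e₂` by `β₂`.
-/

section ScaledDualMul

variable {R : Type*} [CommSemiring R]

/-- The multiplication `(x₀ + x₁ε)(y₀ + y₁ε) = x₀y₀ + b(x₀y₁ + x₁y₀)ε` on `R²`, where `![1, 0]`
stands for `1` and `![0, 1]` for `ε`. It is the coordinate form of the algebra `m⁹` with `β₂ = b`;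
for `b = 1` it is the multiplication of the dual numbers. -/
def scaledDualMul (b : R) : (Fin 2 → R) →ₗ[R] (Fin 2 → R) →ₗ[R] (Fin 2 → R) :=
  LinearMap.mk₂ R (fun x y => ![x 0 * y 0, b * (x 0 * y 1 + x 1 * y 0)])
    (fun x x' y => by ext i; fin_cases i <;> simp <;> ring)
    (fun c x y => by ext i; fin_cases i <;> simp <;> ring)
    (fun x y y' => by ext i; fin_cases i <;> simp <;> ring)
    (fun c x y => by ext i; fin_cases i <;> simp <;> ring)

theorem scaledDualMul_apply (b : R) (x y : Fin 2 → R) :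
    scaledDualMul b x y = ![x 0 * y 0, b * (x 0 * y 1 + x 1 * y 0)] :=
  rfl

theorem eq_scaledDualMul {b : R} {m : (Fin 2 → R) →ₗ[R] (Fin 2 → R) →ₗ[R] (Fin 2 → R)}
    (h11 : m ![1, 0] ![1, 0] = ![1, 0]) (h12 : m ![1, 0] ![0, 1] = b • ![0, 1])
    (h21 : m ![0, 1] ![1, 0] = b • ![0, 1]) (h22 : m ![0, 1] ![0, 1] = 0) :
    m = scaledDualMul b := by
  have single_zero : Pi.single 0 1 = (![1, 0] : Fin 2 → R) := by ext i; fin_cases i <;> rfl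
  have single_one : Pi.single 1 1 = (![0, 1] : Fin 2 → R) := by ext i; fin_cases i <;> rfl
  have zero_eq : (0 : Fin 2 → R) = ![0, 0] := by ext i; fin_cases i <;> rfl
  refine (Pi.basisFun R (Fin 2)).ext fun i => (Pi.basisFun R (Fin 2)).ext fun j => ?_
  fin_cases i <;> fin_cases j <;>
    simp [single_zero, single_one, scaledDualMul_apply, h11, h12, h21, h22, zero_eq]

theorem scaledDualMul_assoc_iff {b : R} :
    (∀ x y z, scaledDualMul b (scaledDualMul b x y) z = scaledDualMul b x (scaledDualMul b y z)) ↔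
      IsIdempotentElem b := by
  refine ⟨fun hassoc => ?_, fun hb x y z => ?_⟩
  · have h := congrFun (hassoc ![1, 0] ![1, 0] ![0, 1]) 1
    simpa [scaledDualMul_apply, IsIdempotentElem] using h.symm
  · ext i
    fin_cases i
    · simp [scaledDualMul_apply, mul_assoc]
    · calc b * (x 0 * y 0 * z 1 + b * (x 0 * y 1 + x 1 * y 0) * z 0)
          = b * (x 0 * y 0 * z 1) + b * b * (x 0 * y 1 * z 0 + x 1 * y 0 * z 0) := by ring
        _ = b * b * (x 0 * y 0 * z 1 + x 0 * y 1 * z 0) + b * (x 1 * y 0 * z 0) := by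
          rw [hb.eq]; ring
        _ = b * (x 0 * (b * (y 0 * z 1 + y 1 * z 0)) + x 1 * (y 0 * z 0)) := by ring

theorem forall_scaledDualMul_eq_self_iff {b : R} {u : Fin 2 → R} :
    (∀ x, scaledDualMul b u x = x) ↔ b = 1 ∧ u = ![1, 0] := by
  constructor
  · intro hu
    have hu₀ : u 0 = 1 := by simpa [scaledDualMul_apply] using congrFun (hu ![1, 0]) 0
    have hb : b = 1 := by simpa [scaledDualMul_apply, hu₀] using congrFun (hu ![0, 1]) 1
    have hu₁ : u 1 = 0 := by simpa [scaledDualMul_apply, hb] using congrFun (hu ![1, 0]) 1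
    exact ⟨hb, by ext i; fin_cases i <;> simp [hu₀, hu₁]⟩
  · rintro ⟨rfl, rfl⟩ x
    ext i
    fin_cases i <;> simp [scaledDualMul_apply]

end ScaledDualMul

theorem stmt_6_general {R : Type*} [CommSemiring R] [IsCancelMulZero R] {b : R}
    {m : (Fin 2 → R) →ₗ[R] (Fin 2 → R) →ₗ[R] (Fin 2 → R)}
    (hcomm : ∀ x y, m x y = m y x)
    (h11 : m ![1, 0] ![1, 0] = ![1, 0])
    (h12 : m ![1, 0] ![0, 1] = b • ![0, 1])
    (h22 : m ![0, 1] ![0, 1] = 0) :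
    ((∀ x y z, m (m x y) z = m x (m y z)) ↔ (b = 0 ∨ b = 1)) ∧
    ((∃ u, ∀ x, m u x = x) ↔ b = 1) ∧
    (b = 1 → ∀ x, m ![1, 0] x = x) := by
  obtain rfl := eq_scaledDualMul h11 h12 ((hcomm _ _).trans h12) h22
  refine ⟨scaledDualMul_assoc_iff.trans IsIdempotentElem.iff_eq_zero_or_one, ?_, fun hb => ?_⟩
  · simp only [forall_scaledDualMul_eq_self_iff, exists_and_left, exists_eq, and_true]
  · exact forall_scaledDualMul_eq_self_iff.mpr ⟨hb, rfl⟩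

/-- The algebra `m⁹`: associativity holds iff `β₂ = 0` or `β₂ = 1`; it is unital iff
`β₂ = 1`, in which case `e₁` is the identity element. -/
theorem stmt_6 (K : Type*) [Field K] (hchar : (2 : K) ≠ 0) (β₂ : K)
    (m : (Fin 2 → K) →ₗ[K] (Fin 2 → K) →ₗ[K] (Fin 2 → K))
    (hcomm : ∀ x y, m x y = m y x)
    (h11 : m ![1, 0] ![1, 0] = ![1, 0])
    (h12 : m ![1, 0] ![0, 1] = β₂ • ![0, 1])
    (h22 : m ![0, 1] ![0, 1] = 0) :
    ((∀ x y z, m (m x y) z = m x (m y z)) ↔ (β₂ = 0 ∨ β₂ = 1)) ∧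
    ((∃ u, ∀ x, m u x = x) ↔ β₂ = 1) ∧
    (β₂ = 1 → ∀ x, m ![1, 0] x = x) :=
  stmt_6_general hcomm h11 h12 h22
end

section
/- Let K be a field of characteristic ≠ 2 and let α₄ ∈ K. Let A be the K-algebra on K² with basis e₁, e₂ whose multiplication is the commutative K-bilinear map m with m(e₁,e₁) = e₁, m(e₁,e₂) = e₁, m(e₂,e₂) = α₄e₁. Then m is associative if and only if α₄ = 1, and A is not unital for any value of α₄. -/
/-!
All products lie on the line through `e₁`, a proper subset of the plane, so there is no identity.
Comparing `(e₁ e₂) e₂ = e₁` with `e₁ (e₂ e₂) = α₄ e₁` shows that associativity forces `α₄ = 1`.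
Conversely, at `α₄ = 1` the product factors as `x y = (l x * l y) e₁` for the linear form
`l x = x₀ + x₁`, and every product of this shape is associative.
-/

theorem not_exists_left_identity_of_forall_mem {A : Type*} {m : A → A → A} {S : Set A}
    (hS : S ≠ Set.univ) (hm : ∀ x y, m x y ∈ S) : ¬ ∃ u, ∀ x, m u x = x := by
  rintro ⟨u, hu⟩
  exact hS (Set.eq_univ_of_forall fun x => hu x ▸ hm u x)

section CommSemiring

variable {R : Type*} [CommSemiring R]

theorem assoc_of_eq_mul_smul {M : Type*} [AddCommMonoid M] [Module R M] {m : M → M → M}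
    (l : M →ₗ[R] R) (e : M) (hm : ∀ x y, m x y = (l x * l y) • e) (x y z : M) :
    m (m x y) z = m x (m y z) := by
  simp only [hm, map_smul, smul_eq_mul]
  congr 1
  ring

theorem eq_smul_add_smul_fin_two (x : Fin 2 → R) : x = x 0 • ![1, 0] + x 1 • ![0, 1] := by
  ext i
  fin_cases i <;> simp

theorem bilinear_apply_fin_two {N : Type*} [AddCommMonoid N] [Module R N]
    (m : (Fin 2 → R) →ₗ[R] (Fin 2 → R) →ₗ[R] N) (x y : Fin 2 → R) :
    m x y = (x 0 * y 0) • m ![1, 0] ![1, 0] + (x 0 * y 1) • m ![1, 0] ![0, 1] +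
      (x 1 * y 0) • m ![0, 1] ![1, 0] + (x 1 * y 1) • m ![0, 1] ![0, 1] := by
  conv_lhs => rw [eq_smul_add_smul_fin_two x, eq_smul_add_smul_fin_two y]
  simp only [map_add, map_smul, LinearMap.add_apply, LinearMap.smul_apply, smul_add, smul_smul,
    mul_comm (y _)]
  abel

theorem range_smul_vec_one_zero_ne_univ [Nontrivial R] :
    Set.range (fun c : R => c • ![(1 : R), 0]) ≠ Set.univ := by
  intro h
  obtain ⟨c, hc⟩ : ![0, 1] ∈ Set.range (fun c : R => c • ![(1 : R), 0]) := h ▸ Set.mem_univ _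
  simpa using congrFun hc 1

theorem stmt_7_general [Nontrivial R] (α₄ : R)
    (m : (Fin 2 → R) →ₗ[R] (Fin 2 → R) →ₗ[R] (Fin 2 → R))
    (hcomm : ∀ x y, m x y = m y x)
    (h11 : m ![1, 0] ![1, 0] = ![1, 0])
    (h12 : m ![1, 0] ![0, 1] = ![1, 0])
    (h22 : m ![0, 1] ![0, 1] = α₄ • ![1, 0]) :
    ((∀ x y z, m (m x y) z = m x (m y z)) ↔ α₄ = 1) ∧
    ¬ ∃ u, ∀ x, m u x = x := by
  have mul_eq (x y : Fin 2 → R) :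
      m x y = (x 0 * y 0 + x 0 * y 1 + x 1 * y 0 + x 1 * y 1 * α₄) • ![1, 0] := by
    simp only [bilinear_apply_fin_two m x y, h11, h12, hcomm ![0, 1] ![1, 0], h22, smul_smul,
      add_smul]
  refine ⟨⟨fun assoc => ?_, ?_⟩,
    not_exists_left_identity_of_forall_mem range_smul_vec_one_zero_ne_univ
      fun x y => ⟨_, (mul_eq x y).symm⟩⟩
  · have smul_e₁ : ![1, 0] = α₄ • ![(1 : R), 0] := by
      simpa only [h12, h22, map_smul, h11] using assoc ![1, 0] ![0, 1] ![0, 1]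
    simpa using (congrFun smul_e₁ 0).symm
  · rintro rfl
    let l : (Fin 2 → R) →ₗ[R] R := ∑ i, LinearMap.proj i
    have mul_eq_smul (x y : Fin 2 → R) : m x y = (l x * l y) • ![1, 0] := by
      rw [mul_eq]
      congr 1
      simp only [l, Fin.sum_univ_two, LinearMap.add_apply, LinearMap.proj_apply]
      ring
    exact assoc_of_eq_mul_smul l ![1, 0] mul_eq_smul

end CommSemiring

/-- The algebra `m¹⁰`: associativity holds iff `α₄ = 1`, and it is never unital. -/
theorem stmt_7 (K : Type*) [Field K] (hchar : (2 : K) ≠ 0) (α₄ : K)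
    (m : (Fin 2 → K) →ₗ[K] (Fin 2 → K) →ₗ[K] (Fin 2 → K))
    (hcomm : ∀ x y, m x y = m y x)
    (h11 : m ![1, 0] ![1, 0] = ![1, 0])
    (h12 : m ![1, 0] ![0, 1] = ![1, 0])
    (h22 : m ![0, 1] ![0, 1] = α₄ • ![1, 0]) :
    ((∀ x y z, m (m x y) z = m x (m y z)) ↔ α₄ = 1) ∧
    ¬ ∃ u, ∀ x, m u x = x := by
  exact stmt_7_general α₄ m hcomm h11 h12 h22
end

section
/- Let K be a field of characteristic ≠ 2. None of the following five K-algebras on K² with basis e₁, e₂ is associative (and in particular none is unital): (m⁷) m(e₁,e₁) = e₁, m(e₁,e₂) = e₁ + (1/2)e₂, m(e₂,e₂) = 0; (m⁸) m(e₁,e₁) = e₁, m(e₁,e₂) = (1/2)e₂, m(e₂,e₂) = e₁; (m¹¹) m(e₁,e₁) = e₁, m(e₁,e₂) = 0, m(e₂,e₂) = e₁; (m¹⁵) m(e₁,e₁) = e₂, m(e₁,e₂) = −2e₁ + 3e₂, m(e₂,e₂) = −8e₁ + 8e₂; (m¹⁶) m(e₁,e₁) = 0, m(e₁,e₂) = e₁,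 m(e₂,e₂) = 0. -/
/-! A commutative algebra spanned by a unit `u` and one more vector `v` is associative: the
associator vanishes as soon as one argument is `u`, and it vanishes at `(v, v, v)` by commutativity.
In dimension two a non-associative commutative algebra therefore has no unit, and associativity of
the products `(x * x) * y` and `(x * y) * y` of basis vectors forces three polynomial identities
between the structure constants, one of which fails for each of the five algebras. -/

theorem assoc_of_span_unit_pair_eq_top {R M : Type*} [CommSemiring R] [AddCommMonoid M]
    [Module R M] {m : M →ₗ[R] M →ₗ[R] M} (hcomm : ∀ x y, m x y = m y x) {u v : M}
    (hu : ∀ x, m u x = x) (hspan : Submodule.span R {u, v} = ⊤) (x y z : M) :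
    m (m x y) z = m x (m y z) := by
  have exists_coeffs (w : M) : ∃ a b : R, a • u + b • v = w :=
    Submodule.mem_span_pair.mp (hspan ▸ Submodule.mem_top)
  have hu_right (w : M) : m w u = w := (hcomm w u).trans (hu w)
  obtain ⟨a₁, b₁, rfl⟩ := exists_coeffs x
  obtain ⟨a₂, b₂, rfl⟩ := exists_coeffs y
  obtain ⟨a₃, b₃, rfl⟩ := exists_coeffs z
  simp only [map_add, map_smul, LinearMap.add_apply, LinearMap.smul_apply, hu, hu_right,
    hcomm (m v v) v]

theorem assoc_of_unit_of_finrank_eq_two {K V : Type*} [Field K] [AddCommGroup V] [Module K V]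
    (hV : Module.finrank K V = 2) {m : V →ₗ[K] V →ₗ[K] V} (hcomm : ∀ x y, m x y = m y x)
    (hunit : ∃ u, ∀ x, m u x = x) (x y z : V) : m (m x y) z = m x (m y z) := by
  obtain ⟨u, hu⟩ := hunit
  have : Nontrivial V := Module.nontrivial_of_finrank_eq_succ hV
  have u_ne_zero : u ≠ 0 := by
    rintro rfl
    obtain ⟨w, hw⟩ := exists_ne (0 : V)
    exact hw (by simpa using (hu w).symm)
  obtain ⟨v, huv⟩ := exists_linearIndependent_pair_of_one_lt_finrank (hV ▸ one_lt_two) u_ne_zero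
  have hspan : Submodule.span K {u, v} = ⊤ := by
    simpa [Set.pair_comm] using huv.span_eq_top_of_card_eq_finrank (by simp [hV])
  exact assoc_of_span_unit_pair_eq_top hcomm hu hspan x y z

theorem structure_constant_identities_of_assoc {R M : Type*} [CommRing R] [AddCommGroup M]
    [Module R M] {m : M →ₗ[R] M →ₗ[R] M} {x y : M} (hli : LinearIndependent R ![x, y])
    (a b c d e f : R)
    (hxx : m x x = a • x + b • y) (hxy : m x y = c • x + d • y) (hyy : m y y = e • x + f • y)
    (hassoc : ∀ x y z, m (m x y) z = m x (m y z)) :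
    b * e = c * d ∧ a * d + b * f = b * c + d ^ 2 ∧ c ^ 2 + d * e = a * e + c * f := by
  have hxxy : (a * c + b * e) • x + (a * d + b * f) • y =
      (c * a + d * c) • x + (c * b + d * d) • y := by
    have h := hassoc x x y
    simp only [hxx, hxy, hyy, map_add, map_smul, LinearMap.add_apply, LinearMap.smul_apply] at h
    linear_combination (norm := module) h
  have hxyy : (c * c + d * e) • x + (c * d + d * f) • y =
      (e * a + f * c) • x + (e * b + f * d) • y := by
    have h := hassoc x y y
    simp only [hxx, hxy, hyy, map_add, map_smul, LinearMap.add_apply, LinearMap.smul_apply] at h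
    linear_combination (norm := module) h
  obtain ⟨hx₁, hy₁⟩ := hli.eq_of_pair hxxy
  obtain ⟨hx₂, -⟩ := hli.eq_of_pair hxyy
  exact ⟨by linear_combination hx₁, by linear_combination hy₁, by linear_combination hx₂⟩

theorem not_assoc_and_not_unital_of_structure_constants {K V : Type*} [Field K] [AddCommGroup V]
    [Module K V] (hV : Module.finrank K V = 2) {m : V →ₗ[K] V →ₗ[K] V}
    (hcomm : ∀ x y, m x y = m y x) {x y : V} (hli : LinearIndependent K ![x, y]) (a b c d e f : K)
    (hxx : m x x = a • x + b • y) (hxy : m x y = c • x + d • y) (hyy : m y y = e • x + f • y)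
    (h : ¬ (b * e = c * d ∧ a * d + b * f = b * c + d ^ 2 ∧ c ^ 2 + d * e = a * e + c * f)) :
    ¬ (∀ x y z, m (m x y) z = m x (m y z)) ∧ ¬ ∃ u, ∀ x, m u x = x :=
  have not_assoc := mt (structure_constant_identities_of_assoc hli a b c d e f hxx hxy hyy) h
  ⟨not_assoc, mt (assoc_of_unit_of_finrank_eq_two hV hcomm) not_assoc⟩

/-- The algebras `m⁷`, `m⁸`, `m¹¹`, `m¹⁵`, `m¹⁶` are neither associative nor unital. -/
theorem stmt_9 (K : Type*) [Field K] (hchar : (2 : K) ≠ 0)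
    (m₇ m₈ m₁₁ m₁₅ m₁₆ : (Fin 2 → K) →ₗ[K] (Fin 2 → K) →ₗ[K] (Fin 2 → K))
    (hcomm₇ : ∀ x y, m₇ x y = m₇ y x)
    (h7a : m₇ ![1, 0] ![1, 0] = ![1, 0])
    (h7b : m₇ ![1, 0] ![0, 1] = ![1, 0] + (2 : K)⁻¹ • ![0, 1])
    (h7c : m₇ ![0, 1] ![0, 1] = 0)
    (hcomm₈ : ∀ x y, m₈ x y = m₈ y x)
    (h8a : m₈ ![1, 0] ![1, 0] = ![1, 0])
    (h8b : m₈ ![1, 0] ![0, 1] = (2 : K)⁻¹ • ![0, 1])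
    (h8c : m₈ ![0, 1] ![0, 1] = ![1, 0])
    (hcomm₁₁ : ∀ x y, m₁₁ x y = m₁₁ y x)
    (h11a : m₁₁ ![1, 0] ![1, 0] = ![1, 0])
    (h11b : m₁₁ ![1, 0] ![0, 1] = 0)
    (h11c : m₁₁ ![0, 1] ![0, 1] = ![1, 0])
    (hcomm₁₅ : ∀ x y, m₁₅ x y = m₁₅ y x)
    (h15a : m₁₅ ![1, 0] ![1, 0] = ![0, 1])
    (h15b : m₁₅ ![1, 0] ![0, 1] = (-2 : K) • ![1, 0] + (3 : K) • ![0, 1])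
    (h15c : m₁₅ ![0, 1] ![0, 1] = (-8 : K) • ![1, 0] + (8 : K) • ![0, 1])
    (hcomm₁₆ : ∀ x y, m₁₆ x y = m₁₆ y x)
    (h16a : m₁₆ ![1, 0] ![1, 0] = 0)
    (h16b : m₁₆ ![1, 0] ![0, 1] = ![1, 0])
    (h16c : m₁₆ ![0, 1] ![0, 1] = 0) :
    (¬ (∀ x y z, m₇ (m₇ x y) z = m₇ x (m₇ y z)) ∧ ¬ ∃ u, ∀ x, m₇ u x = x) ∧
    (¬ (∀ x y z, m₈ (m₈ x y) z = m₈ x (m₈ y z)) ∧ ¬ ∃ u, ∀ x, m₈ u x = x) ∧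
    (¬ (∀ x y z, m₁₁ (m₁₁ x y) z = m₁₁ x (m₁₁ y z)) ∧ ¬ ∃ u, ∀ x, m₁₁ u x = x) ∧
    (¬ (∀ x y z, m₁₅ (m₁₅ x y) z = m₁₅ x (m₁₅ y z)) ∧ ¬ ∃ u, ∀ x, m₁₅ u x = x) ∧
    (¬ (∀ x y z, m₁₆ (m₁₆ x y) z = m₁₆ x (m₁₆ y z)) ∧ ¬ ∃ u, ∀ x, m₁₆ u x = x) := by
  have hV : Module.finrank K (Fin 2 → K) = 2 := Module.finrank_fin_fun K
  have hli : LinearIndependent K ![![(1 : K), 0], ![0, 1]] := by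
    simp [LinearIndependent.pair_iff]
  refine ⟨not_assoc_and_not_unital_of_structure_constants hV hcomm₇ hli 1 0 1 2⁻¹ 0 0
      (by simp [h7a]) (by simp [h7b]) (by simp [h7c]) ?_,
    not_assoc_and_not_unital_of_structure_constants hV hcomm₈ hli 1 0 0 2⁻¹ 1 0
      (by simp [h8a]) (by simp [h8b]) (by simp [h8c]) ?_,
    not_assoc_and_not_unital_of_structure_constants hV hcomm₁₁ hli 1 0 0 0 1 0
      (by simp [h11a]) (by simp [h11b]) (by simp [h11c]) ?_,
    not_assoc_and_not_unital_of_structure_constants hV hcomm₁₅ hli 0 1 (-2) 3 (-8) 8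
      (by simp [h15a]) (by simp [h15b]) (by simp [h15c]) ?_,
    not_assoc_and_not_unital_of_structure_constants hV hcomm₁₆ hli 0 0 1 0 0 0
      (by simp [h16a]) (by simp [h16b]) (by simp [h16c]) ?_⟩
  · rintro ⟨h, -, -⟩
    exact hchar (by simpa using h.symm)
  · rintro ⟨-, h, -⟩
    field_simp at h
    exact one_ne_zero (α := K) (by linear_combination h)
  · rintro ⟨-, -, h⟩
    simp at h
  · rintro ⟨h, -, -⟩
    exact hchar (by linear_combination -h)
  · rintro ⟨-, -, h⟩
    simp at h
end

section
/- Let K be a field and let α₂, β₂ ∈ K. Let A be the K-algebra on K² with basis e₁, e₂ whose multiplication is the commutative K-bilinear map m with m(e₁,e₁) = e₂, m(e₁,e₂) = α₂e₁ + β₂e₂, m(e₂,e₂) = α₂β₂e₁ + (α₂ + β₂²)e₂. If the polynomial P_R(y) = −1 + (5α₂ + β₂²)y + (−8α₂² − 2α₂β₂²)y² + (4α₂³ + α₂²β₂²)y³ has no root in K, then the multiplication of A is not surjective, i.e. the induced K-linear map A ⊗_K A → A is not surjective. (Indeed, if α₂ = 0 then all products lie in the span of e₂, while if α₂ ≠ 0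 then α₂⁻¹ is a root of P_R.) -/
/-!
The polynomial factors as `P_R(y) = (α₂ y - 1) (1 + (4 α₂ + β₂²) y (α₂ y - 1))`, so it vanishes at
an inverse of `α₂`. On the other hand `α₂` divides the `e₁`-coordinate of every product, so a
surjective multiplication forces `α₂` to be a unit.
-/

section Lift

open TensorProduct

variable {R M N P : Type*} [CommSemiring R] [AddCommMonoid M] [AddCommMonoid N] [AddCommMonoid P]
  [Module R M] [Module R N] [Module R P] {s : Set M} {t : Set N}

theorem range_lift_eq_span_image2 (hs : Submodule.span R s = ⊤) (ht : Submodule.span R t = ⊤)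
    (f : M →ₗ[R] N →ₗ[R] P) :
    LinearMap.range (lift f) = Submodule.span R (Set.image2 (fun x y ↦ f x y) s t) := by
  have hcompr : (mk R M N).compr₂ (lift f) = f := LinearMap.ext₂ lift.tmul
  rw [← Submodule.map₂_span_span, hs, ht, LinearMap.range_eq_map, ← map₂_mk_top_top_eq_top,
    Submodule.map_map₂, hcompr]

theorem isUnit_of_surjective_lift_of_dvd (hs : Submodule.span R s = ⊤)
    (ht : Submodule.span R t = ⊤) {f : M →ₗ[R] N →ₗ[R] P} (hf : Function.Surjective (lift f))
    {φ : P →ₗ[R] R} (hφ : Function.Surjective φ) {a : R}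
    (hdvd : ∀ x ∈ s, ∀ y ∈ t, a ∣ φ (f x y)) : IsUnit a := by
  have hle : LinearMap.range (lift f) ≤ Submodule.comap φ (Ideal.span {a}) := by
    rw [range_lift_eq_span_image2 hs ht, Submodule.span_le, Set.image2_subset_iff]
    exact fun x hx y hy ↦ Ideal.mem_span_singleton.mpr (hdvd x hx y hy)
  obtain ⟨p, hp⟩ := hφ 1
  obtain ⟨z, rfl⟩ := hf p
  have hmem : φ (lift f z) ∈ Ideal.span {a} := hle ⟨z, rfl⟩
  rwa [hp, Ideal.mem_span_singleton, ← isUnit_iff_dvd_one] at hmem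

end Lift

theorem span_pair_fin_two_eq_top (R : Type*) [Semiring R] :
    Submodule.span R {![(1 : R), 0], ![0, 1]} = ⊤ := by
  refine eq_top_iff.mpr fun x _ ↦ Submodule.mem_span_pair.mpr ⟨x 0, x 1, ?_⟩
  ext i
  fin_cases i <;> simp

section ExceptionalAlgebra

variable {R : Type*} [CommRing R] {α₂ β₂ : R}

theorem exceptional_polynomial_eq_mul (α₂ β₂ y : R) :
    -1 + (5 * α₂ + β₂ ^ 2) * y + (-8 * α₂ ^ 2 - 2 * α₂ * β₂ ^ 2) * y ^ 2 +
        (4 * α₂ ^ 3 + α₂ ^ 2 * β₂ ^ 2) * y ^ 3 =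
      (α₂ * y - 1) * (1 + (4 * α₂ + β₂ ^ 2) * y * (α₂ * y - 1)) := by
  ring

theorem isUnit_of_surjective_exceptional_mul
    {m : (Fin 2 → R) →ₗ[R] (Fin 2 → R) →ₗ[R] (Fin 2 → R)}
    (hcomm : ∀ x y, m x y = m y x)
    (h11 : m ![1, 0] ![1, 0] = ![0, 1])
    (h12 : m ![1, 0] ![0, 1] = α₂ • ![1, 0] + β₂ • ![0, 1])
    (h22 : m ![0, 1] ![0, 1] = (α₂ * β₂) • ![1, 0] + (α₂ + β₂ ^ 2) • ![0, 1])
    (hsurj : Function.Surjective (TensorProduct.lift m)) : IsUnit α₂ := by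
  have hspan := span_pair_fin_two_eq_top R
  refine isUnit_of_surjective_lift_of_dvd hspan hspan hsurj
    (φ := LinearMap.proj 0) (LinearMap.proj_surjective 0) ?_
  rintro x (rfl | rfl) y (rfl | rfl)
  · simp [h11]
  · simp [h12]
  · simp [hcomm ![0, 1], h12]
  · simp [h22]

theorem stmt_17_general (m : (Fin 2 → R) →ₗ[R] (Fin 2 → R) →ₗ[R] (Fin 2 → R))
    (hcomm : ∀ x y, m x y = m y x)
    (h11 : m ![1, 0] ![1, 0] = ![0, 1])
    (h12 : m ![1, 0] ![0, 1] = α₂ • ![1, 0] + β₂ • ![0, 1])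
    (h22 : m ![0, 1] ![0, 1] = (α₂ * β₂) • ![1, 0] + (α₂ + β₂ ^ 2) • ![0, 1])
    (hroot : ∀ y : R, -1 + (5 * α₂ + β₂ ^ 2) * y + (-8 * α₂ ^ 2 - 2 * α₂ * β₂ ^ 2) * y ^ 2 +
      (4 * α₂ ^ 3 + α₂ ^ 2 * β₂ ^ 2) * y ^ 3 ≠ 0) :
    ¬ Function.Surjective (TensorProduct.lift m) := by
  intro hsurj
  obtain ⟨y, hy⟩ := (isUnit_of_surjective_exceptional_mul hcomm h11 h12 h22 hsurj).exists_right_inv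
  refine hroot y ?_
  rw [exceptional_polynomial_eq_mul, hy, sub_self, zero_mul]

end ExceptionalAlgebra

/-- If the polynomial `P_R` attached to the exceptional algebra `A_R` has no root in
`K`, then the multiplication of `A_R` is not surjective. -/
theorem stmt_17 (K : Type*) [Field K] (α₂ β₂ : K)
    (m : (Fin 2 → K) →ₗ[K] (Fin 2 → K) →ₗ[K] (Fin 2 → K))
    (hcomm : ∀ x y, m x y = m y x)
    (h11 : m ![1, 0] ![1, 0] = ![0, 1])
    (h12 : m ![1, 0] ![0, 1] = α₂ • ![1, 0] + β₂ • ![0, 1])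
    (h22 : m ![0, 1] ![0, 1] = (α₂ * β₂) • ![1, 0] + (α₂ + β₂ ^ 2) • ![0, 1])
    (hroot : ∀ y : K, -1 + (5 * α₂ + β₂ ^ 2) * y + (-8 * α₂ ^ 2 - 2 * α₂ * β₂ ^ 2) * y ^ 2 +
      (4 * α₂ ^ 3 + α₂ ^ 2 * β₂ ^ 2) * y ^ 3 ≠ 0) :
    ¬ Function.Surjective (TensorProduct.lift m) :=
  stmt_17_general m hcomm h11 h12 h22 hroot
end
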